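/- For every r ≥ 2 there exists k̃ ∈ ℕ such that for every commutative ring R, every pair of columns b^+ = (b_1,…,b_r)^t ∈ R^r and b^− = (b_{−r},…,b_{−1})^t ∈ R^r with Σ_{i=1}^r b_i b_{−i} = 0, and every element s ∈ ⟨b_1,…,b_r⟩ ⊴ R, there exists a matrix M ∈ Θ(r,R) such that s^{k̃} b^− = M b^+. -/

import Mathlib

open Matrix

/-- `Θ(r,R)`: `r × r` matrices that are antisymmetric with respect to the antidiagonal
and have zeroes on the antidiagonal. -/
def Theta (r : ℕ) (R : Type*) [CommRing R] : Set (Matrix (Fin r) (Fin r) R) :=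
  {M | (∀ i j : Fin r, M ⟨r - 1 - j.val, by omega⟩ ⟨r - 1 - i.val, by omega⟩ = - M i j) ∧
    ∀ i : Fin r, M i ⟨r - 1 - i.val, by omega⟩ = 0}

/-!
Write `s = c ⬝ᵥ b⁺` and let `u` be `b⁻` read backwards, so that `u ⬝ᵥ b⁺ = 0`. The alternating
matrix `u cᵗ - c uᵗ` sends `b⁺` to `s u - 0 c`. Reversing the order of its rows turns `u` back into
`b⁻` and symmetry about the diagonal into symmetry about the antidiagonal, so the exponent `1`
works for every `r`.
-/

section Wedge

variable {n R : Type*} [CommRing R]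

/-- The matrix `u vᵗ - v uᵗ` of the bivector `u ∧ v`, the basic example of an alternating matrix. -/
def wedgeMatrix (u v : n → R) : Matrix n n R :=
  vecMulVec u v - vecMulVec v u

theorem transpose_wedgeMatrix (u v : n → R) : (wedgeMatrix u v)ᵀ = -wedgeMatrix u v := by
  rw [wedgeMatrix, transpose_sub, transpose_vecMulVec, transpose_vecMulVec, neg_sub]

theorem diag_wedgeMatrix (u v : n → R) : (wedgeMatrix u v).diag = 0 := by
  rw [wedgeMatrix, diag_sub, diag_vecMulVec, diag_vecMulVec, mul_comm, sub_self]

theorem wedgeMatrix_mulVec [Fintype n] (u v b : n → R) :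
    wedgeMatrix u v *ᵥ b = (v ⬝ᵥ b) • u - (u ⬝ᵥ b) • v := by
  simp only [wedgeMatrix, sub_mulVec, vecMulVec_mulVec, op_smul_eq_smul]

end Wedge

theorem mk_sub_one_sub_eq_rev {r : ℕ} (i : Fin r) (h : r - 1 - i.val < r) :
    (⟨r - 1 - i.val, h⟩ : Fin r) = i.rev := by
  ext
  simp only [Fin.val_rev]
  omega

section Theta

variable {r : ℕ} {R : Type*} [CommRing R]

theorem mem_Theta_iff {M : Matrix (Fin r) (Fin r) R} :
    M ∈ Theta r R ↔ (∀ i j, M j.rev i.rev = -M i j) ∧ ∀ i, M i i.rev = 0 := by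
  simp only [Theta, Set.mem_ofPred_eq, mk_sub_one_sub_eq_rev]

theorem submatrix_rev_mem_Theta {A : Matrix (Fin r) (Fin r) R}
    (hskew : Aᵀ = -A) (hdiag : A.diag = 0) : A.submatrix Fin.rev id ∈ Theta r R := by
  refine mem_Theta_iff.2 ⟨fun i j => ?_, fun i => congrFun hdiag i.rev⟩
  simpa using congrFun₂ hskew i.rev j

theorem exists_uniform_exponent_theta_general {bp bm : Fin r → R} {s : R}
    (horth : bp ⬝ᵥ (bm ∘ Fin.rev) = 0) (hs : s ∈ Ideal.span (Set.range bp)) :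
    ∃ M ∈ Theta r R, M *ᵥ bp = s • bm := by
  obtain ⟨c, hc : c ⬝ᵥ bp = s⟩ := Ideal.mem_span_range_iff_exists_fun.1 hs
  let A := wedgeMatrix (bm ∘ Fin.rev) c
  have hA : A *ᵥ bp = s • (bm ∘ Fin.rev) := by
    rw [wedgeMatrix_mulVec, hc, dotProduct_comm, horth, zero_smul, sub_zero]
  refine ⟨A.submatrix Fin.rev id,
    submatrix_rev_mem_Theta (transpose_wedgeMatrix _ _) (diag_wedgeMatrix _ _), ?_⟩
  calc
    A.submatrix Fin.rev id *ᵥ bp = (A *ᵥ bp) ∘ Fin.rev := rfl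
    _ = s • bm := by
      ext i
      simp [hA]

end Theta

/-- A uniform exponent `k̃`, depending only on `r`: for any commutative ring `R`,
columns `b⁺`, `b⁻` with `∑ b_i b_{-i} = 0` and any `s ∈ ⟨b_1,…,b_r⟩`, one has
`s^k̃ b⁻ = M b⁺` for some `M ∈ Θ(r,R)`. -/
theorem exists_uniform_exponent_theta
    (r : ℕ) (hr : 2 ≤ r) :
    ∃ k : ℕ, ∀ (R : Type*) [CommRing R], ∀ bp bm : Fin r → R, ∀ s : R,
      (∑ i : Fin r, bp i * bm ⟨r - 1 - i.val, by omega⟩) = 0 →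
      s ∈ Ideal.span (Set.range bp) →
      ∃ M ∈ Theta r R, M.mulVec bp = fun i => s ^ k * bm i := by
  refine ⟨1, fun R _ bp bm s horth hs => ?_⟩
  simp only [mk_sub_one_sub_eq_rev, pow_one] at horth ⊢
  exact exists_uniform_exponent_theta_general horth hs
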